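/- arXiv:2404.19115 — 3 statements merged into one kernel-verified Lean document; each statement's English description precedes it below -/
import Mathlib

section
/- Let N ≥ 1, let θ ∈ ℝ^N with θ_j > 0 for all j, let ζ ∈ ℝ^N, let η > 0, and let M be a real symmetric positive semidefinite N×N matrix. Define the real 2N×2N block matrix H = [[M + diag(1/θ_j), diag(−ζ_j/θ_j²)],[diag(−ζ_j/θ_j²), diag(ζ_j²/θ_j³ + η/θ_j²)]]. Then for every q = (q¹, q²) ∈ ℝ^N × ℝ^N one has qᵀHq = (q¹)ᵀMq¹ + Σ_{j=1}^N (1/θ_j)(q¹_j − ζ_j q²_j/θ_j)² + Σ_{j=1}^N (η/θ_j²)(q²_j)², and H is symmetric positive definite. -/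
/-!
Expanding the block product reduces the identity to a termwise completion of the square,
`q₁²/θ - 2 ζ q₁ q₂/θ² + (ζ²/θ³ + η/θ²) q₂² = (q₁ - ζ q₂/θ)²/θ + η q₂²/θ²`.
Every summand on the right is nonnegative. If the form vanishes, the last sum forces `q₂ = 0`,
and then the middle sum forces `q₁ = 0`; so positive semidefiniteness of `M` is enough for
definiteness of the whole matrix.
-/

open Matrix

/-- The Hessian of the Gibbs energy with gamma hyperprior (`r = 1`), as a `2N×2N`
block matrix built from the data-fidelity Hessian `M` and the diagonal blocks in
`ζ` and `θ`. -/
noncomputable def gibbsHessian (N : ℕ) (θ ζ : Fin N → ℝ) (η : ℝ)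
    (M : Matrix (Fin N) (Fin N) ℝ) :
    Matrix (Fin N ⊕ Fin N) (Fin N ⊕ Fin N) ℝ :=
  Matrix.fromBlocks
    (M + Matrix.diagonal fun j => 1 / θ j)
    (Matrix.diagonal fun j => -(ζ j) / (θ j) ^ 2)
    (Matrix.diagonal fun j => -(ζ j) / (θ j) ^ 2)
    (Matrix.diagonal fun j => (ζ j) ^ 2 / (θ j) ^ 3 + η / (θ j) ^ 2)

theorem gibbsHessian_quadratic_form (N : ℕ) (θ ζ : Fin N → ℝ) (hθ : ∀ j, 0 < θ j) (η : ℝ)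
    (M : Matrix (Fin N) (Fin N) ℝ) (q1 q2 : Fin N → ℝ) :
    Sum.elim q1 q2 ⬝ᵥ (gibbsHessian N θ ζ η M *ᵥ Sum.elim q1 q2)
      = q1 ⬝ᵥ (M *ᵥ q1)
        + (∑ j : Fin N, (1 / θ j) * (q1 j - ζ j * q2 j / θ j) ^ 2)
        + ∑ j : Fin N, (η / (θ j) ^ 2) * (q2 j) ^ 2 := by
  rw [gibbsHessian, fromBlocks_mulVec, sumElim_dotProduct_sumElim]
  simp only [Sum.elim_comp_inl, Sum.elim_comp_inr, add_mulVec, dotProduct_add, add_assoc]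
  congr 1
  simp only [dotProduct, mulVec_diagonal, ← Finset.sum_add_distrib]
  refine Finset.sum_congr rfl fun j _ => ?_
  have := (hθ j).ne'
  field_simp
  ring

theorem gibbsHessian_isHermitian (N : ℕ) (θ ζ : Fin N → ℝ) (η : ℝ)
    (M : Matrix (Fin N) (Fin N) ℝ) (hM : M.IsHermitian) :
    (gibbsHessian N θ ζ η M).IsHermitian := by
  refine IsHermitian.fromBlocks (hM.add ?_) ?_ ?_ <;> simp [IsHermitian]

/-- Quadratic-form identity for the Hessian of the Gibbs energy with gamma hyperprior:
`qᵀHq = (q¹)ᵀMq¹ + Σ_j (1/θ_j)(q¹_j − ζ_j q²_j/θ_j)² + Σ_j (η/θ_j²)(q²_j)²`,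
and `H` is symmetric positive definite. -/
theorem gibbs_hessian_quadratic_form_and_posDef
    (N : ℕ) (hN : 1 ≤ N) (θ ζ : Fin N → ℝ) (hθ : ∀ j, 0 < θ j)
    (η : ℝ) (hη : 0 < η)
    (M : Matrix (Fin N) (Fin N) ℝ) (hM : M.PosSemidef) :
    (∀ q1 q2 : Fin N → ℝ,
      Sum.elim q1 q2 ⬝ᵥ (gibbsHessian N θ ζ η M *ᵥ Sum.elim q1 q2)
        = q1 ⬝ᵥ (M *ᵥ q1)
          + (∑ j : Fin N, (1 / θ j) * (q1 j - ζ j * q2 j / θ j) ^ 2)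
          + ∑ j : Fin N, (η / (θ j) ^ 2) * (q2 j) ^ 2) ∧
    (gibbsHessian N θ ζ η M).PosDef := by
  refine ⟨gibbsHessian_quadratic_form N θ ζ hθ η M,
    .of_dotProduct_mulVec_pos (gibbsHessian_isHermitian N θ ζ η M hM.1) fun x hx => ?_⟩
  obtain ⟨q1, q2, rfl⟩ : ∃ q1 q2, x = Sum.elim q1 q2 :=
    ⟨x ∘ Sum.inl, x ∘ Sum.inr, (Sum.elim_comp_inl_inr x).symm⟩
  rw [star_trivial, gibbsHessian_quadratic_form N θ ζ hθ η M]
  have hA : 0 ≤ q1 ⬝ᵥ (M *ᵥ q1) := by simpa using hM.dotProduct_mulVec_nonneg q1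
  have hB : ∀ j ∈ Finset.univ, 0 ≤ (1 / θ j) * (q1 j - ζ j * q2 j / θ j) ^ 2 := fun j _ =>
    mul_nonneg (one_div_pos.2 (hθ j)).le (sq_nonneg _)
  have hC : ∀ j ∈ Finset.univ, 0 ≤ (η / (θ j) ^ 2) * (q2 j) ^ 2 := fun j _ => by positivity
  have hB' := Finset.sum_nonneg hB
  have hC' := Finset.sum_nonneg hC
  by_contra! hle
  have hB0 := (Finset.sum_eq_zero_iff_of_nonneg hB).1 (by linarith)
  have hC0 := (Finset.sum_eq_zero_iff_of_nonneg hC).1 (by linarith)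
  have h2 : ∀ j, q2 j = 0 := fun j => by
    simpa [hη.ne', (hθ j).ne'] using hC0 j (Finset.mem_univ j)
  have h1 : ∀ j, q1 j = 0 := fun j => by
    simpa [h2 j, (hθ j).ne'] using hB0 j (Finset.mem_univ j)
  refine hx (funext ?_)
  rintro (j | j)
  · exact h1 j
  · exact h2 j
end

section
/- Let A be a real m×N matrix, let 1 ≤ ℓ < min(m, N), let U_ℓ be a real N×ℓ matrix with orthonormal columns, let V_ℓ be a real m×ℓ matrix with orthonormal columns, let v_{ℓ+1} ∈ ℝ^m be a unit vector orthogonal to every column of V_ℓ, let C_ℓ be a real lower bidiagonal ℓ×ℓ matrix with diagonal entries ρ_1, …, ρ_ℓ and subdiagonal entries σ_2, …, σ_ℓ, and let σ_{ℓ+1} ∈ ℝ. Assume the Lanczos identities A·U_ℓ = V_ℓ·C_ℓ + σ_{ℓ+1}·v_{ℓ+1}·e_ℓᵀ and Aᵀ·V_ℓ = U_ℓ·C_ℓᵀ hold, and let r = ‖r‖·V_ℓ·e₁ ∈ ℝ^m. Then for every y ∈ ℝ^ℓ, ‖(AAᵀ + I_m)·V_ℓ·y − r‖² = ‖(C_ℓC_ℓᵀ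 + I_ℓ)·y − ‖r‖·e₁‖² + σ_{ℓ+1}²·(ρ_ℓ·y_ℓ)². -/
/-! The Lanczos identities give
`(AAᵀ + I)V y - r = V w + c v` with `w = (CCᵀ + I)y - ‖r‖e₁` and `c = σ_{ℓ+1} (Cᵀy)_ℓ`, and
`(Cᵀy)_ℓ = ρ_ℓ y_ℓ` because the last column of the lower bidiagonal matrix `C` has only its diagonal
entry. As `V` has orthonormal columns and `v` is a unit vector orthogonal to them, Pythagoras
(`norm_sq_mulVec_add_smul`) yields `‖V w + c v‖² = ‖w‖² + c²`. -/

open Matrix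

lemma norm_sq_toLp_eq_dotProduct {n : ℕ} (x : Fin n → ℝ) :
    ‖(WithLp.equiv 2 (Fin n → ℝ)).symm x‖ ^ 2 = x ⬝ᵥ x := by
  rw [EuclideanSpace.norm_sq_eq]
  simp [dotProduct, sq]

/-- Pythagoras for a matrix with orthonormal columns and a unit vector orthogonal to them. -/
lemma norm_sq_mulVec_add_smul {m l : ℕ} (V : Matrix (Fin m) (Fin l) ℝ) (hV : Vᵀ * V = 1)
    (v : Fin m → ℝ) (hv : ‖(WithLp.equiv 2 (Fin m → ℝ)).symm v‖ = 1) (hvV : Vᵀ *ᵥ v = 0)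
    (w : Fin l → ℝ) (c : ℝ) :
    ‖(WithLp.equiv 2 (Fin m → ℝ)).symm (V *ᵥ w + c • v)‖ ^ 2
      = ‖(WithLp.equiv 2 (Fin l → ℝ)).symm w‖ ^ 2 + c ^ 2 := by
  have hvv : v ⬝ᵥ v = 1 := by rw [← norm_sq_toLp_eq_dotProduct, hv, one_pow]
  have hVv : v ⬝ᵥ (V *ᵥ w) = 0 := by
    rw [dotProduct_mulVec, ← mulVec_transpose, hvV, zero_dotProduct]
  have hVV : (V *ᵥ w) ⬝ᵥ (V *ᵥ w) = w ⬝ᵥ w := by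
    rw [dotProduct_mulVec, ← mulVec_transpose, mulVec_mulVec, hV, one_mulVec]
  rw [norm_sq_toLp_eq_dotProduct, norm_sq_toLp_eq_dotProduct]
  simp only [add_dotProduct, dotProduct_add, smul_dotProduct, dotProduct_smul, smul_eq_mul,
    hvv, hVV, hVv, dotProduct_comm (V *ᵥ w) v]
  ring

/-- The Lanczos bidiagonalization identity reducing the Krylov least squares problem for
`(AAᵀ + I_m)z = r` to an `ℓ×ℓ` tridiagonal problem: for `z = V_ℓ y`,
`‖(AAᵀ + I_m)V_ℓ y − r‖² = ‖(C_ℓC_ℓᵀ + I_ℓ)y − ‖r‖e₁‖² + σ_{ℓ+1}²(ρ_ℓ y_ℓ)²`. -/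
theorem lanczos_bidiagonalization_residual_identity
    (m N ℓ : ℕ) (hℓ1 : 1 ≤ ℓ) (hℓ2 : ℓ < min m N)
    (A : Matrix (Fin m) (Fin N) ℝ)
    (U : Matrix (Fin N) (Fin ℓ) ℝ) (hU : Uᵀ * U = 1)
    (V : Matrix (Fin m) (Fin ℓ) ℝ) (hV : Vᵀ * V = 1)
    (v : Fin m → ℝ) (hv : ‖(WithLp.equiv 2 (Fin m → ℝ)).symm v‖ = 1)
    (hvV : Vᵀ *ᵥ v = 0)
    (ρ σs : Fin ℓ → ℝ) (C : Matrix (Fin ℓ) (Fin ℓ) ℝ)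
    (hC : ∀ i j : Fin ℓ, C i j =
      if (i : ℕ) = (j : ℕ) then ρ i
      else if (i : ℕ) = (j : ℕ) + 1 then σs i else 0)
    (σℓ1 : ℝ)
    (hL1 : A * U = V * C +
      σℓ1 • Matrix.vecMulVec v (Pi.single (⟨ℓ - 1, by omega⟩ : Fin ℓ) 1))
    (hL2 : Aᵀ * V = U * Cᵀ)
    (r : Fin m → ℝ)
    (hr : r = ‖(WithLp.equiv 2 (Fin m → ℝ)).symm r‖ •
      (V *ᵥ Pi.single (⟨0, by omega⟩ : Fin ℓ) 1)) :
    ∀ y : Fin ℓ → ℝ,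
      ‖(WithLp.equiv 2 (Fin m → ℝ)).symm ((A * Aᵀ + 1) *ᵥ (V *ᵥ y) - r)‖ ^ 2
        = ‖(WithLp.equiv 2 (Fin ℓ → ℝ)).symm ((C * Cᵀ + 1) *ᵥ y -
            ‖(WithLp.equiv 2 (Fin m → ℝ)).symm r‖ •
              (Pi.single (⟨0, by omega⟩ : Fin ℓ) 1 : Fin ℓ → ℝ))‖ ^ 2
          + σℓ1 ^ 2 * (ρ ⟨ℓ - 1, by omega⟩ * y ⟨ℓ - 1, by omega⟩) ^ 2 := by
  intro y
  generalize ‖(WithLp.equiv 2 (Fin m → ℝ)).symm r‖ = n at hr ⊢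
  have hlast : (Cᵀ *ᵥ y) ⟨ℓ - 1, by omega⟩ = ρ ⟨ℓ - 1, by omega⟩ * y ⟨ℓ - 1, by omega⟩ := by
    rw [mulVec, dotProduct, Finset.sum_eq_single (⟨ℓ - 1, by omega⟩ : Fin ℓ)]
    · simp [hC]
    · intro i _ hi
      have h1 : (i : ℕ) ≠ ℓ - 1 := fun h => hi (Fin.ext h)
      -- Row `ℓ + 1` does not exist, so the last column has no subdiagonal entry.
      have h2 : (i : ℕ) ≠ ℓ - 1 + 1 := by have := i.isLt; omega
      simp [hC, h1, h2]
    · simp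
  have hres : (A * Aᵀ + 1) *ᵥ (V *ᵥ y) - r
      = V *ᵥ ((C * Cᵀ + 1) *ᵥ y - n • (Pi.single (⟨0, by omega⟩ : Fin ℓ) 1 : Fin ℓ → ℝ))
        + (σℓ1 * (ρ ⟨ℓ - 1, by omega⟩ * y ⟨ℓ - 1, by omega⟩)) • v := by
    have hA : (A * Aᵀ) *ᵥ (V *ᵥ y) = V *ᵥ ((C * Cᵀ) *ᵥ y)
        + (σℓ1 * (ρ ⟨ℓ - 1, by omega⟩ * y ⟨ℓ - 1, by omega⟩)) • v := by
      rw [mulVec_mulVec, Matrix.mul_assoc, hL2, ← Matrix.mul_assoc, hL1, ← mulVec_mulVec,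
        add_mulVec, smul_mulVec, vecMulVec_mulVec, single_one_dotProduct, hlast,
        ← mulVec_mulVec, ← mulVec_mulVec, op_smul_eq_smul, smul_smul]
    rw [add_mulVec, one_mulVec, hA, add_mulVec, one_mulVec, mulVec_sub, mulVec_add, mulVec_smul,
      ← hr]
    abel
  rw [hres, norm_sq_mulVec_add_smul V hV v hv hvV, mul_pow]
end

section
/- Let P be a real N×N matrix which is an orthogonal projection, i.e. P² = P and Pᵀ = P, and let g : ℝ^N → ℝ be any function. Define f(α) = g(Pα) + (1/2)‖α‖². If α* ∈ ℝ^N is a global minimizer of f, then Pα* = α*. -/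
/-!
Comparing the minimizer `α*` with the competitor `Pα*` leaves the `g`-term unchanged, because
`P(Pα*) = Pα*`; hence `‖α*‖² ≤ ‖Pα*‖²`. Pythagoras for the orthogonal projection `P` gives
`‖α* - Pα*‖² = ‖α*‖² - ‖Pα*‖² ≤ 0`, so `α* = Pα*`.
-/

open Matrix

/-- If `P` is an orthogonal projection and `f(α) = g(Pα) + (1/2)‖α‖²`, then any global
minimizer `α*` of `f` satisfies `Pα* = α*`. -/
theorem minimizer_fixed_by_orthogonal_projection
    (N : ℕ) (P : Matrix (Fin N) (Fin N) ℝ)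
    (hP2 : P * P = P) (hPt : Pᵀ = P)
    (g : (Fin N → ℝ) → ℝ) (f : (Fin N → ℝ) → ℝ)
    (hf : ∀ α : Fin N → ℝ,
      f α = g (P *ᵥ α) + (1 / 2) * ‖(WithLp.equiv 2 (Fin N → ℝ)).symm α‖ ^ 2)
    (αstar : Fin N → ℝ) (hmin : ∀ β : Fin N → ℝ, f αstar ≤ f β) :
    P *ᵥ αstar = αstar := by
  have hnorm (v : Fin N → ℝ) : ‖(WithLp.equiv 2 (Fin N → ℝ)).symm v‖ ^ 2 = v ⬝ᵥ v := by
    rw [EuclideanSpace.norm_sq_eq]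
    simp [dotProduct, ← sq]
  have hidem : P *ᵥ (P *ᵥ αstar) = P *ᵥ αstar := by rw [mulVec_mulVec, hP2]
  have hle := hmin (P *ᵥ αstar)
  rw [hf, hf, hidem, hnorm, hnorm] at hle
  have horth : (P *ᵥ αstar) ⬝ᵥ (P *ᵥ αstar) = αstar ⬝ᵥ (P *ᵥ αstar) := by
    rw [dotProduct_mulVec, ← mulVec_transpose, hPt, hidem, dotProduct_comm]
  have hpyth : (αstar - P *ᵥ αstar) ⬝ᵥ (αstar - P *ᵥ αstar)
      = αstar ⬝ᵥ αstar - (P *ᵥ αstar) ⬝ᵥ (P *ᵥ αstar) := by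
    rw [sub_dotProduct, dotProduct_sub, dotProduct_sub, dotProduct_comm (P *ᵥ αstar) αstar, horth]
    ring
  have hnonneg : 0 ≤ (αstar - P *ᵥ αstar) ⬝ᵥ (αstar - P *ᵥ αstar) :=
    Finset.sum_nonneg fun i _ => mul_self_nonneg _
  have hzero : (αstar - P *ᵥ αstar) ⬝ᵥ (αstar - P *ᵥ αstar) = 0 := by linarith
  exact (sub_eq_zero.mp (dotProduct_self_eq_zero.mp hzero)).symm
end
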